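/- arXiv:2306.01799 — 11 statements merged into one kernel-verified Lean document; each statement's English description precedes it below -/
import Mathlib

section
/- Let K ≤ n, let α : Fin K → ℝ be strictly decreasing (α k > α l whenever k < l) with α k > 0 for all k, and let v : Fin n → ℝ be injective. If an injective map σ₀ : Fin K → Fin n maximizes W(σ) = ∑_{k} α k * v (σ k) over all injective maps σ : Fin K → Fin n, then v (σ₀ k) > v (σ₀ l) whenever k < l, and v (σ₀ (K-1)) > v i for every index i not in the range of σ₀; that is, σ₀ lists the K largest values of v in strictly decreasing order. -/
/-!
An exchange argument. Swapping the ads in slots `k < l` changes the welfare by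
`(α k - α l) * (v (σ₀ l) - v (σ₀ k))`, and replacing the ad in the last slot by an unplaced ad `i`
changes it by `α last * (v i - v (σ₀ last))`. Both are nonpositive at a maximizer, the factors in `α`
are positive, and injectivity of `v` makes the resulting inequalities strict.
-/

/-- Only-if direction: with strictly decreasing positive multipliers and injective
eCPMs, any welfare-maximizing injective assignment lists the K largest eCPMs in
strictly decreasing order. -/
theorem welfare_maximizer_is_sorted
    (n K : ℕ) (hK : 0 < K) (hKn : K ≤ n)
    (α : Fin K → ℝ)
    (hα_strict : ∀ k l : Fin K, k < l → α l < α k)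
    (hα_pos : ∀ k : Fin K, 0 < α k)
    (v : Fin n → ℝ) (hv : Function.Injective v)
    (σ₀ : Fin K → Fin n) (hσ₀ : Function.Injective σ₀)
    (hmax : ∀ σ : Fin K → Fin n, Function.Injective σ →
      ∑ k : Fin K, α k * v (σ k) ≤ ∑ k : Fin K, α k * v (σ₀ k)) :
    (∀ k l : Fin K, k < l → v (σ₀ l) < v (σ₀ k)) ∧
    (∀ i : Fin n, i ∉ Set.range σ₀ →
      v i < v (σ₀ ⟨K - 1, Nat.sub_lt hK Nat.one_pos⟩)) := by
  constructor
  · intro k l hkl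
    have hne : v (σ₀ l) ≠ v (σ₀ k) := fun h => hkl.ne' (hσ₀ (hv h))
    have hsum := hmax (σ₀ ∘ Equiv.swap k l) (hσ₀.comp (Equiv.swap k l).injective)
    rw [← sub_nonpos, ← Finset.sum_sub_distrib, Fintype.sum_eq_add k l hkl.ne] at hsum
    · simp only [Function.comp_apply, Equiv.swap_apply_left, Equiv.swap_apply_right] at hsum
      refine lt_of_le_of_ne (le_of_not_gt fun hlt => ?_) hne
      nlinarith [mul_pos (sub_pos.mpr (hα_strict k l hkl)) (sub_pos.mpr hlt)]
    · rintro m ⟨hmk, hml⟩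
      simp [Equiv.swap_apply_of_ne_of_ne hmk hml]
  · intro i hi
    -- The exchange with an unplaced ad works for every slot, not only the last.
    generalize (⟨K - 1, Nat.sub_lt hK Nat.one_pos⟩ : Fin K) = k
    have hne : v i ≠ v (σ₀ k) := fun h => hi ⟨k, (hv h).symm⟩
    have hinj : Function.Injective (Function.update σ₀ k i) := by
      intro a b hab
      by_cases ha : a = k <;> by_cases hb : b = k
      · rw [ha, hb]
      · subst ha
        rw [Function.update_self, Function.update_of_ne hb] at hab
        exact absurd ⟨b, hab.symm⟩ hi
      · subst hb
        rw [Function.update_self, Function.update_of_ne ha] at hab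
        exact absurd ⟨a, hab⟩ hi
      · rw [Function.update_of_ne ha, Function.update_of_ne hb] at hab
        exact hσ₀ hab
    have hsum := hmax _ hinj
    rw [← sub_nonpos, ← Finset.sum_sub_distrib, Fintype.sum_eq_single k] at hsum
    · rw [Function.update_self, sub_nonpos] at hsum
      exact lt_of_le_of_ne (le_of_mul_le_mul_left hsum (hα_pos k)) hne
    · intro m hm
      rw [Function.update_of_ne hm, sub_self]
end

section
/- Let n, b, p, q be as in the setup with b i > 0, p i ∈ [0,1], q i ∈ [0,1]. If q minimizes the conditional risk, i.e. R(q) = −(1/2) · ∑_{i} ∑_{j} |b i * p i − b j * p j|, then q ranks every pair of ads correctly: for all indices i, j, if b i * p i > b j * p j then b i * q i > b j * q j. -/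
/-!
Symmetrize the risk: let `T i j` be its `(i, j)` summand and `F i j = T i j + T j i + |b i p i - b j p j|`.
Each `F i j` is nonnegative, because at least one of the two indicators of a pair equals `1`, so that
`T i j + T j i` is `± (b i p i - b j p j)` or, for tied predictions, `0`. The value assumed for the risk
says that `∑ F i j = 0`, so every `F i j` vanishes. For a pair with `b j p j < b i p i` that is ranked
wrongly or tied, `F i j` is at least `b i p i - b j p j > 0`, a contradiction.
-/

/-- Any minimizer of the conditional risk ranks every pair of ads correctly. -/
theorem risk_minimizer_ranks_correctly
    (n : ℕ) (b p q : Fin n → ℝ)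
    (hb : ∀ i, 0 < b i)
    (hp : ∀ i, p i ∈ Set.Icc (0 : ℝ) 1)
    (hq : ∀ i, q i ∈ Set.Icc (0 : ℝ) 1)
    (hmin : ∑ i : Fin n, ∑ j : Fin n,
        (if i ≠ j then
          (b i * p i - b j * p j) * (if b i * q i ≤ b j * q j then (1 : ℝ) else 0)
        else 0) =
      -(1 / 2) * ∑ i : Fin n, ∑ j : Fin n, |b i * p i - b j * p j|) :
    ∀ i j : Fin n, b j * p j < b i * p i → b j * q j < b i * q i := by
  intro i j hij
  by_contra! hle
  set T : Fin n → Fin n → ℝ := fun i j =>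
    if i ≠ j then
      (b i * p i - b j * p j) * (if b i * q i ≤ b j * q j then (1 : ℝ) else 0)
    else 0 with hT
  have hF_nonneg : ∀ k l, 0 ≤ T k l + T l k + |b k * p k - b l * p l| := by
    intro k l
    have h1 := le_abs_self (b k * p k - b l * p l)
    have h2 := neg_abs_le (b k * p k - b l * p l)
    simp only [hT]
    rcases eq_or_ne k l with rfl | hkl
    · simp
    · rw [if_pos hkl, if_pos hkl.symm]
      split_ifs <;> linarith
  have hF_sum : ∑ k, ∑ l, (T k l + T l k + |b k * p k - b l * p l|) = 0 := by
    have hcomm : ∑ k, ∑ l, T l k = ∑ k, ∑ l, T k l := Finset.sum_comm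
    simp only [Finset.sum_add_distrib]
    rw [hcomm, hmin]
    ring
  have hF_row := (Finset.sum_eq_zero_iff_of_nonneg
    fun k _ => Finset.sum_nonneg fun l _ => hF_nonneg k l).1 hF_sum i (Finset.mem_univ i)
  have hF_zero := (Finset.sum_eq_zero_iff_of_nonneg
    fun l _ => hF_nonneg i l).1 hF_row j (Finset.mem_univ j)
  have hne : i ≠ j := by
    rintro rfl
    exact lt_irrefl _ hij
  simp only [hT] at hF_zero
  rw [if_pos hne, if_pos hne.symm, if_pos hle, abs_of_pos (sub_pos.2 hij)] at hF_zero
  split_ifs at hF_zero <;> linarith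
end

section
/- Let n ≥ 1 and b, p, q : Fin n → ℝ with b i > 0, p i ∈ [0,1], q i ∈ [0,1], and assume the predicted eCPMs are pairwise distinct: b i * q i ≠ b j * q j whenever i ≠ j. Let j* be the (unique) index maximizing b j * q j. Then the welfare achieved by q is lower bounded by the conditional risk: b j* * p j* ≥ −(1/2) · R(q) + max_{i} (b i * p i) − (1/4) · ∑_{i ∈ Fin n} ∑_{j ∈ Fin n} |b i * p i − b j * p j|. -/
/-!
Write `v i = b i * p i`, and let `T i j` be the `(i, j)` summand of the risk. The symmetrized term
`G i j = T i j + T j i + |v i - v j|` is nonnegative: it is `2 * |v i - v j|` when the prediction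
misorders the pair and `0` when it orders it correctly. Its double sum is `2 * R(q) + ∑ |v i - v j|`,
so the claim says that a quarter of this sum is at least `max v - v jstar`. If `k` maximizes `v` and
`k ≠ jstar`, the prediction misorders `k` and `jstar`, and the two terms `G k jstar` and
`G jstar k`, each equal to `2 * (v k - v jstar)`, already suffice.
-/

/-- A nonnegative double sum dominates any off-diagonal entry plus its transpose. -/
lemma add_swap_le_sum_sum {n : ℕ} (G : Fin n → Fin n → ℝ) (hG : ∀ i j, 0 ≤ G i j)
    {k l : Fin n} (hkl : k ≠ l) : G k l + G l k ≤ ∑ i, ∑ j, G i j := by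
  have hrow : ∀ i j, G i j ≤ ∑ j, G i j := fun i j =>
    Finset.single_le_sum (f := G i) (fun j _ => hG i j) (Finset.mem_univ j)
  calc G k l + G l k ≤ ∑ j, G k j + ∑ j, G l j := add_le_add (hrow k l) (hrow l k)
    _ = ∑ i ∈ {k, l}, ∑ j, G i j := by rw [Finset.sum_pair hkl]
    _ ≤ ∑ i, ∑ j, G i j :=
      Finset.sum_le_sum_of_subset_of_nonneg (Finset.subset_univ _)
        fun i _ _ => Finset.sum_nonneg fun j _ => hG i j

/-- The welfare achieved by the prediction `q` in a single-slot auction is lower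
bounded in terms of the conditional risk. -/
theorem welfare_lower_bounded_by_risk
    (n : ℕ) (hn : 1 ≤ n) (b p q : Fin n → ℝ)
    (hb : ∀ i, 0 < b i)
    (hp : ∀ i, p i ∈ Set.Icc (0 : ℝ) 1)
    (hq : ∀ i, q i ∈ Set.Icc (0 : ℝ) 1)
    (hdistinct : ∀ i j : Fin n, i ≠ j → b i * q i ≠ b j * q j)
    (jstar : Fin n) (hjstar : ∀ i, b i * q i ≤ b jstar * q jstar) :
    -(1 / 2) * (∑ i : Fin n, ∑ j : Fin n,
        (if i ≠ j then
          (b i * p i - b j * p j) * (if b i * q i ≤ b j * q j then (1 : ℝ) else 0)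
        else 0)) +
      Finset.univ.sup' ⟨⟨0, hn⟩, Finset.mem_univ _⟩ (fun i => b i * p i) -
      (1 / 4) * ∑ i : Fin n, ∑ j : Fin n, |b i * p i - b j * p j| ≤
    b jstar * p jstar := by
  obtain ⟨k, -, hk⟩ := Finset.exists_mem_eq_sup' (s := Finset.univ)
    ⟨⟨0, hn⟩, Finset.mem_univ _⟩ (fun i => b i * p i)
  have hmax : b jstar * p jstar ≤ b k * p k :=
    hk ▸ Finset.le_sup' (fun i => b i * p i) (Finset.mem_univ jstar)
  rw [hk]
  set T : Fin n → Fin n → ℝ := fun i j => if i ≠ j then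
    (b i * p i - b j * p j) * (if b i * q i ≤ b j * q j then (1 : ℝ) else 0) else 0 with hT
  set G : Fin n → Fin n → ℝ := fun i j => T i j + T j i + |b i * p i - b j * p j| with hGdef
  have hsum : ∑ i, ∑ j, G i j
      = 2 * (∑ i, ∑ j, T i j) + ∑ i, ∑ j, |b i * p i - b j * p j| := by
    simp only [hGdef, Finset.sum_add_distrib]
    rw [Finset.sum_comm (f := fun i j => T j i)]
    ring
  have hG : ∀ i j, 0 ≤ G i j := by
    intro i j
    have h1 := le_abs_self (b i * p i - b j * p j)
    have h2 := neg_abs_le (b i * p i - b j * p j)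
    simp only [hGdef, hT]
    split_ifs <;> linarith
  change -(1 / 2) * (∑ i, ∑ j, T i j) + b k * p k - _ ≤ _
  rcases eq_or_ne k jstar with rfl | hne
  · have : 0 ≤ ∑ i, ∑ j, G i j :=
      Finset.sum_nonneg fun i _ => Finset.sum_nonneg fun j _ => hG i j
    linarith
  · have hle := hjstar k
    have hlt : ¬ b jstar * q jstar ≤ b k * q k :=
      not_le.mpr (lt_of_le_of_ne hle (hdistinct k jstar hne))
    have hkj : T k jstar = b k * p k - b jstar * p jstar := by simp [hT, hne, hle]
    have hjk : T jstar k = 0 := by simp only [hT, if_neg hlt, mul_zero, ite_self]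
    have habs : |b k * p k - b jstar * p jstar| = b k * p k - b jstar * p jstar :=
      abs_of_nonneg (by linarith)
    have h1 : G k jstar = 2 * (b k * p k - b jstar * p jstar) := by
      simp only [hGdef, hkj, hjk, habs]; ring
    have h2 : G jstar k = 2 * (b k * p k - b jstar * p jstar) := by
      simp only [hGdef, hkj, hjk, abs_sub_comm (b jstar * p jstar), habs]; ring
    have := add_swap_le_sum_sum G hG hne
    linarith
end

section
/- Let n ≥ 1 and b, p, q : Fin n → ℝ with b i > 0, p i ∈ [0,1], q i ∈ [0,1]. Assume q minimizes the conditional risk, i.e. R(q) = −(1/2) · ∑_{i} ∑_{j} |b i * p i − b j * p j|. Then for any index j* maximizing the predicted eCPM b j * q j, the achieved welfare is optimal: b j* * p j* = max_{i} (b i * p i). -/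
/-!
Write `v i = b i * p i` and `s i = b i * q i`. The ordered pairs `(i, j)` and `(j, i)` together
contribute `v i - v j`, `v j - v i` or `0` to the risk, according as `s i < s j`, `s j < s i` or
`s i = s j`; in every case at least `-|v i - v j|`. Equality in the sum over all pairs therefore
forces equality in each pair, and for a pair `(i, jstar)` with `s i ≤ s jstar` this says
`v i ≤ v jstar`.
-/

/-- The symmetrized risk of a pair is at least `-|v i - v j|`. -/
lemma pair_risk_add_abs_nonneg {n : ℕ} (v s : Fin n → ℝ) (i j : Fin n) :
    0 ≤ (if i ≠ j then (v i - v j) * (if s i ≤ s j then (1 : ℝ) else 0) else 0) +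
      (if j ≠ i then (v j - v i) * (if s j ≤ s i then (1 : ℝ) else 0) else 0) +
      |v i - v j| := by
  have h1 := neg_abs_le (v i - v j)
  have h2 := le_abs_self (v i - v j)
  have h3 := abs_nonneg (v i - v j)
  split_ifs <;> linarith

/-- If the risk attains its lower bound, then so does the contribution of every pair. -/
lemma pair_risk_add_abs_eq_zero {n : ℕ} (v s : Fin n → ℝ)
    (hmin : ∑ i : Fin n, ∑ j : Fin n,
        (if i ≠ j then (v i - v j) * (if s i ≤ s j then (1 : ℝ) else 0) else 0) =
      -(1 / 2) * ∑ i : Fin n, ∑ j : Fin n, |v i - v j|) (i j : Fin n) :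
    (if i ≠ j then (v i - v j) * (if s i ≤ s j then (1 : ℝ) else 0) else 0) +
      (if j ≠ i then (v j - v i) * (if s j ≤ s i then (1 : ℝ) else 0) else 0) +
      |v i - v j| = 0 := by
  have hsum : ∑ i : Fin n, ∑ j : Fin n,
      ((if i ≠ j then (v i - v j) * (if s i ≤ s j then (1 : ℝ) else 0) else 0) +
      (if j ≠ i then (v j - v i) * (if s j ≤ s i then (1 : ℝ) else 0) else 0) +
      |v i - v j|) = 0 := by
    have hswap := Finset.sum_comm (s := Finset.univ) (t := Finset.univ)
      (f := fun i j : Fin n =>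
        if j ≠ i then (v j - v i) * (if s j ≤ s i then (1 : ℝ) else 0) else 0)
    simp only [Finset.sum_add_distrib]
    linarith
  have hrow := (Finset.sum_eq_zero_iff_of_nonneg fun i _ =>
    Finset.sum_nonneg fun j _ => pair_risk_add_abs_nonneg v s i j).1 hsum i (Finset.mem_univ i)
  exact (Finset.sum_eq_zero_iff_of_nonneg fun j _ =>
    pair_risk_add_abs_nonneg v s i j).1 hrow j (Finset.mem_univ j)

/-- A minimizer of the conditional risk achieves optimal welfare in the
single-slot auction. -/
theorem risk_minimizer_achieves_optimal_welfare
    (n : ℕ) (hn : 1 ≤ n) (b p q : Fin n → ℝ)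
    (hb : ∀ i, 0 < b i)
    (hp : ∀ i, p i ∈ Set.Icc (0 : ℝ) 1)
    (hq : ∀ i, q i ∈ Set.Icc (0 : ℝ) 1)
    (hmin : ∑ i : Fin n, ∑ j : Fin n,
        (if i ≠ j then
          (b i * p i - b j * p j) * (if b i * q i ≤ b j * q j then (1 : ℝ) else 0)
        else 0) =
      -(1 / 2) * ∑ i : Fin n, ∑ j : Fin n, |b i * p i - b j * p j|)
    (jstar : Fin n) (hjstar : ∀ i, b i * q i ≤ b jstar * q jstar) :
    b jstar * p jstar =
      Finset.univ.sup' ⟨⟨0, hn⟩, Finset.mem_univ _⟩ (fun i => b i * p i) := by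
  refine le_antisymm (Finset.le_sup' (fun i => b i * p i) (Finset.mem_univ jstar))
    (Finset.sup'_le _ _ fun i _ => ?_)
  have hpair := pair_risk_add_abs_eq_zero (fun i => b i * p i) (fun i => b i * q i) hmin i jstar
  have hle := hjstar i
  have habs := le_abs_self (b i * p i - b jstar * p jstar)
  have hnonneg := abs_nonneg (b i * p i - b jstar * p jstar)
  rcases eq_or_ne i jstar with rfl | hne
  · exact le_rfl
  · simp only [ne_eq, hne, hne.symm, not_false_eq_true, if_true, hle] at hpair
    split_ifs at hpair <;> linarith
end

section
/- Let n ≥ 1, B > 0, σ > 0, and b, p, q : Fin n → ℝ with 0 < b i ≤ B, p i ∈ [0,1], q i ∈ [0,1] for all i. Define the ranking loss ℓ(q) = ∑_{i ≠ j} (b i * p i − b j * p j) * χ(b i * q i ≤ b j * q j) and the logistic surrogate ℓ^log_σ(q) = ∑_{i ≠ j} (b i * p i − b j * p j) * log(1 + exp(−σ * (b i * q i − b j * q j))), both sums over ordered pairs of distinct indices. Then |ℓ^log_σ(q) − ℓ(q)| ≤ (1/2) * max{1, log(1 + exp(σ*B)) − log(1 + exp(−σ*B)) − 1} * ∑_{i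 ∈ Fin n} ∑_{j ∈ Fin n} |b i * p i − b j * p j|. -/
/-!
Since the weights `b i * p i - b j * p j` are antisymmetric in `(i, j)`, the difference of the two
losses equals half the weighted sum of `F x - F (-x)`, where `x = b i * q i - b j * q j` and
`F x = log (1 + exp (-σ x)) - χ (x ≤ 0)`. The identity `log (1 + exp y) - log (1 + exp (-y)) = y`
makes this odd part equal to `1 - σ x` for `x > 0`, to `-1 - σ x` for `x < 0` and to `0` at `x = 0`.
As `|x| ≤ B`, it is bounded by `max 1 (σ B - 1)`, which is the constant of the theorem.
-/

lemma log_one_add_exp_sub (y : ℝ) :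
    Real.log (1 + Real.exp y) - Real.log (1 + Real.exp (-y)) = y := by
  have h : 1 + Real.exp y = Real.exp y * (1 + Real.exp (-y)) := by
    rw [mul_add, ← Real.exp_add]
    simp [add_comm]
  rw [h, Real.log_mul (Real.exp_pos y).ne' (by positivity), Real.log_exp]
  ring

/-- A bound on the odd part of the pointwise error between the logistic function of the gap `u - v` and the
indicator of `u ≤ v`. -/
lemma abs_odd_part_le (σ B u v : ℝ) (hσ : 0 < σ) (hu : u ∈ Set.Icc 0 B) (hv : v ∈ Set.Icc 0 B) :
    |(Real.log (1 + Real.exp (-σ * (u - v))) - (if u ≤ v then (1 : ℝ) else 0)) -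
      (Real.log (1 + Real.exp (-σ * (v - u))) - (if v ≤ u then (1 : ℝ) else 0))| ≤
    max 1 (σ * B - 1) := by
  obtain ⟨hu0, huB⟩ := hu
  obtain ⟨hv0, hvB⟩ := hv
  have h := log_one_add_exp_sub (-σ * (u - v))
  rw [show -(-σ * (u - v)) = -σ * (v - u) by ring] at h
  have h1 : σ * (u - v) ≤ σ * B := mul_le_mul_of_nonneg_left (by linarith) hσ.le
  have h2 : σ * (v - u) ≤ σ * B := mul_le_mul_of_nonneg_left (by linarith) hσ.le
  have m1 := le_max_left 1 (σ * B - 1)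
  have m2 := le_max_right 1 (σ * B - 1)
  rcases lt_trichotomy u v with huv | huv | huv
  · have := mul_pos hσ (sub_pos.2 huv)
    rw [if_pos huv.le, if_neg huv.not_ge, abs_le]
    constructor <;> linarith
  · subst huv
    simp
  · have := mul_pos hσ (sub_pos.2 huv)
    rw [if_neg huv.not_ge, if_pos huv.le, abs_le]
    constructor <;> linarith

/-- A sum with antisymmetric weights only sees the antisymmetric part of the summand. -/
lemma abs_sum_antisymm_le {ι : Type*} [Fintype ι] (c : ι → ℝ) (F : ι → ι → ℝ) (M : ℝ)
    (hF : ∀ i j, |F i j - F j i| ≤ M) :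
    |∑ i, ∑ j, (c i - c j) * F i j| ≤ (1 / 2) * M * ∑ i, ∑ j, |c i - c j| := by
  have hswap : ∑ i, ∑ j, (c i - c j) * F i j = ∑ i, ∑ j, (c j - c i) * F j i :=
    Finset.sum_comm
  have hhalf : ∑ i, ∑ j, (c i - c j) * F i j
      = (1 / 2) * ∑ i, ∑ j, (c i - c j) * (F i j - F j i) := by
    have : ∑ i, ∑ j, (c i - c j) * (F i j - F j i)
        = ∑ i, ∑ j, (c i - c j) * F i j + ∑ i, ∑ j, (c j - c i) * F j i := by
      simp only [← Finset.sum_add_distrib]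
      refine Finset.sum_congr rfl fun i _ => Finset.sum_congr rfl fun j _ => ?_
      ring
    linarith
  rw [hhalf, abs_mul, abs_of_pos (by norm_num : (0 : ℝ) < 1 / 2), mul_assoc]
  refine mul_le_mul_of_nonneg_left ?_ (by norm_num)
  simp only [Finset.mul_sum]
  refine (Finset.abs_sum_le_sum_abs _ _).trans (Finset.sum_le_sum fun i _ => ?_)
  refine (Finset.abs_sum_le_sum_abs _ _).trans (Finset.sum_le_sum fun j _ => ?_)
  rw [abs_mul, mul_comm]
  exact mul_le_mul_of_nonneg_right (hF i j) (abs_nonneg _)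

/-- The logistic surrogate approximates the ranking loss up to a constant times
the total absolute pairwise eCPM gap. -/
theorem logistic_surrogate_approximation
    (n : ℕ) (hn : 1 ≤ n) (B σ : ℝ) (hB : 0 < B) (hσ : 0 < σ)
    (b p q : Fin n → ℝ)
    (hb : ∀ i, 0 < b i ∧ b i ≤ B)
    (hp : ∀ i, p i ∈ Set.Icc (0 : ℝ) 1)
    (hq : ∀ i, q i ∈ Set.Icc (0 : ℝ) 1) :
    |(∑ i : Fin n, ∑ j : Fin n,
        (if i ≠ j then
          (b i * p i - b j * p j) *
            Real.log (1 + Real.exp (-σ * (b i * q i - b j * q j)))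
        else 0)) -
      (∑ i : Fin n, ∑ j : Fin n,
        (if i ≠ j then
          (b i * p i - b j * p j) * (if b i * q i ≤ b j * q j then (1 : ℝ) else 0)
        else 0))| ≤
    (1 / 2) *
      max 1 (Real.log (1 + Real.exp (σ * B)) - Real.log (1 + Real.exp (-(σ * B))) - 1) *
      ∑ i : Fin n, ∑ j : Fin n, |b i * p i - b j * p j| := by
  have hmem : ∀ i, b i * q i ∈ Set.Icc 0 B := fun i =>
    ⟨mul_nonneg (hb i).1.le (hq i).1,
      (mul_le_of_le_one_right (hb i).1.le (hq i).2).trans (hb i).2⟩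
  rw [log_one_add_exp_sub]
  refine le_of_eq_of_le ?_ (abs_sum_antisymm_le (fun i => b i * p i)
    (fun i j => Real.log (1 + Real.exp (-σ * (b i * q i - b j * q j))) -
      (if b i * q i ≤ b j * q j then (1 : ℝ) else 0)) _
    fun i j => abs_odd_part_le σ B _ _ hσ (hmem i) (hmem j))
  congr 1
  simp only [← Finset.sum_sub_distrib]
  refine Finset.sum_congr rfl fun i _ => Finset.sum_congr rfl fun j _ => ?_
  -- The diagonal terms may be included, as their weight vanishes.
  by_cases hij : i = j
  · subst hij
    simp
  · rw [if_pos hij, if_pos hij, ← mul_sub]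
end

section
/- Let n ≥ 1, B > 0, and b, p, q : Fin n → ℝ with 0 < b i ≤ B, p i ∈ [0,1], q i ∈ [0,1] for all i. With ℓ(q) = ∑_{i ≠ j} (b i * p i − b j * p j) * χ(b i * q i ≤ b j * q j) and ℓ^log_σ(q) = ∑_{i ≠ j} (b i * p i − b j * p j) * log(1 + exp(−σ * (b i * q i − b j * q j))), the choice σ = 2/B gives |ℓ^log_{2/B}(q) − ℓ(q)| ≤ (1/2) * ∑_{i ∈ Fin n} ∑_{j ∈ Fin n} |b i * p i − b j * p j|. -/
/-!
Adding the `(i, j)` and `(j, i)` terms of the difference of the two losses, the logarithms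
combine through `log (1 + exp (-t)) - log (1 + exp t) = -t`, where
`t = (2 / B) * (b i * q i - b j * q j)`, and the indicators combine to `-sign t`. So each
symmetrised pair contributes `(b i * p i - b j * p j) * (sign t - t)`. Since `b i * q i ∈ [0, B]`,
`t ∈ [-2, 2]`, hence `|sign t - t| ≤ 1`. Summing over all ordered pairs counts every term twice,
which gives the factor `1 / 2`.
-/

lemma log_one_add_exp_neg (t : ℝ) :
    Real.log (1 + Real.exp (-t)) = Real.log (1 + Real.exp t) - t := by
  have h : 1 + Real.exp t = Real.exp t * (1 + Real.exp (-t)) := by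
    rw [mul_add, ← Real.exp_add]
    simp [add_comm]
  rw [h, Real.log_mul (Real.exp_pos t).ne' (by positivity), Real.log_exp]
  ring

/-- The symmetrised error of the logistic surrogate on one pair, for predicted eCPMs `x`, `y`. -/
lemma abs_symm_logistic_error_le {B x y : ℝ} (hB : 0 < B) (hx : x ∈ Set.Icc 0 B)
    (hy : y ∈ Set.Icc 0 B) :
    |(Real.log (1 + Real.exp (-(2 / B) * (x - y))) - (if x ≤ y then (1 : ℝ) else 0)) -
      (Real.log (1 + Real.exp (-(2 / B) * (y - x))) - (if y ≤ x then (1 : ℝ) else 0))| ≤ 1 := by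
  obtain ⟨hx0, hxB⟩ := hx
  obtain ⟨hy0, hyB⟩ := hy
  have e1 : -(2 / B) * (x - y) = -(2 / B * (x - y)) := by ring
  have e2 : -(2 / B) * (y - x) = 2 / B * (x - y) := by ring
  have hc : 0 < 2 / B := by positivity
  have hcB : 2 / B * B = 2 := by field_simp
  have hle : 2 / B * (x - y) ≤ 2 := by
    refine le_trans (mul_le_mul_of_nonneg_left ?_ hc.le) hcB.le
    linarith
  have hge : 2 / B * (y - x) ≤ 2 := by
    refine le_trans (mul_le_mul_of_nonneg_left ?_ hc.le) hcB.le
    linarith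
  rw [e1, e2, log_one_add_exp_neg, abs_le]
  rcases lt_trichotomy x y with h | h | h
  · have := mul_pos hc (sub_pos.2 h)
    rw [if_pos h.le, if_neg h.not_ge]
    constructor <;> linarith
  · subst h
    simp
  · have := mul_pos hc (sub_pos.2 h)
    rw [if_neg h.not_ge, if_pos h.le]
    constructor <;> linarith

/-- A double sum is half of the double sum of its symmetrised terms, so a bound on the latter
halves. -/
lemma abs_sum_sum_le_half_of_symm {ι : Type*} [Fintype ι] (F G : ι → ι → ℝ)
    (h : ∀ i j, |F i j + F j i| ≤ G i j) :
    |∑ i, ∑ j, F i j| ≤ (1 / 2) * ∑ i, ∑ j, G i j := by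
  have h2 : ∑ i, ∑ j, (F i j + F j i) = 2 * ∑ i, ∑ j, F i j := by
    simp only [Finset.sum_add_distrib]
    rw [Finset.sum_comm (f := fun i j => F j i)]
    ring
  have h3 : |∑ i, ∑ j, (F i j + F j i)| ≤ ∑ i, ∑ j, G i j :=
    (Finset.abs_sum_le_sum_abs _ _).trans <| Finset.sum_le_sum fun i _ =>
      (Finset.abs_sum_le_sum_abs _ _).trans <| Finset.sum_le_sum fun j _ => h i j
  rw [h2, abs_mul, abs_two] at h3
  linarith

/-- With the scale `σ = 2/B`, the logistic surrogate approximates the ranking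
loss with constant 1. -/
theorem logistic_surrogate_approximation_optimal_scale
    (n : ℕ) (hn : 1 ≤ n) (B : ℝ) (hB : 0 < B)
    (b p q : Fin n → ℝ)
    (hb : ∀ i, 0 < b i ∧ b i ≤ B)
    (hp : ∀ i, p i ∈ Set.Icc (0 : ℝ) 1)
    (hq : ∀ i, q i ∈ Set.Icc (0 : ℝ) 1) :
    |(∑ i : Fin n, ∑ j : Fin n,
        (if i ≠ j then
          (b i * p i - b j * p j) *
            Real.log (1 + Real.exp (-(2 / B) * (b i * q i - b j * q j)))
        else 0)) -
      (∑ i : Fin n, ∑ j : Fin n,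
        (if i ≠ j then
          (b i * p i - b j * p j) * (if b i * q i ≤ b j * q j then (1 : ℝ) else 0)
        else 0))| ≤
    (1 / 2) * ∑ i : Fin n, ∑ j : Fin n, |b i * p i - b j * p j| := by
  have hbq : ∀ i, b i * q i ∈ Set.Icc 0 B := fun i =>
    ⟨mul_nonneg (hb i).1.le (hq i).1,
      (mul_le_of_le_one_right (hb i).1.le (hq i).2).trans (hb i).2⟩
  simp only [← Finset.sum_sub_distrib]
  apply abs_sum_sum_le_half_of_symm
  intro i j
  by_cases hij : i = j
  · subst hij
    simp
  · rw [if_pos hij, if_pos hij, if_pos (Ne.symm hij), if_pos (Ne.symm hij)]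
    have key := mul_le_mul_of_nonneg_left (abs_symm_logistic_error_le hB (hbq i) (hbq j))
      (abs_nonneg (b i * p i - b j * p j))
    rw [← abs_mul, mul_one] at key
    refine le_trans (le_of_eq ?_) key
    congr 1
    ring
end

section
/- Let n ≥ 1, B > 0, σ > 0, and b, p, q : Fin n → ℝ with 0 < b i ≤ B, p i ∈ [0,1], q i ∈ [0,1] for all i. Define ℓ(q) = ∑_{i ≠ j} (b i * p i − b j * p j) * χ(b i * q i ≤ b j * q j) and the hinge surrogate ℓ^hinge_σ(q) = ∑_{i ≠ j} (b i * p i − b j * p j) * max(−σ * (b i * q i − b j * q j), 0), both sums over ordered pairs of distinct indices. Then |ℓ^hinge_σ(q) − ℓ(q)| ≤ (1/2) * max{1, σ*B − 1} * ∑_{i ∈ Fin n} ∑_{j ∈ Fin n} |b i * p i − b j * p j|. -/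
/-!
Write `a i j = b i * p i - b j * p j` and `x i j = b i * q i - b j * q j`, both antisymmetric. The
difference of the two losses is `∑ a i j * g (x i j)` with `g x = max (-σ x) 0 - χ(x ≤ 0)`, and
averaging it with its transpose gives `(1/2) ∑ a i j * (g (x i j) - g (-x i j))`. Since only one of
`g x`, `g (-x)` is nonzero when `x ≠ 0`, its value being `σ |x| - 1`, and both cancel when `x = 0`,
the bound `|x i j| ≤ B` yields `|g x - g (-x)| ≤ max 1 (σ B - 1)` (`abs_gap_sub_gap_swap_le`). The
factor `1/2` comes from this pairing.
-/

/-- The pairwise error of the hinge, antisymmetrized in the two predicted eCPMs `u` and `v`. -/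
lemma abs_gap_sub_gap_swap_le {B σ u v : ℝ} (hσ : 0 < σ)
    (hu : 0 ≤ u) (huB : u ≤ B) (hv : 0 ≤ v) (hvB : v ≤ B) :
    |(max (-(σ * (u - v))) 0 - (if u ≤ v then (1 : ℝ) else 0)) -
      (max (-(σ * (v - u))) 0 - (if v ≤ u then (1 : ℝ) else 0))| ≤ max 1 (σ * B - 1) := by
  have h1 := le_max_left 1 (σ * B - 1)
  have h2 := le_max_right 1 (σ * B - 1)
  rcases lt_trichotomy u v with h | h | h
  · have hpos : 0 < σ * (v - u) := mul_pos hσ (by linarith)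
    have hle : σ * (v - u) ≤ σ * B := mul_le_mul_of_nonneg_left (by linarith) hσ.le
    rw [if_pos h.le, if_neg h.not_ge, max_eq_left (by linarith), max_eq_right (by linarith),
      abs_le]
    constructor <;> linarith
  · subst h
    simp
  · have hpos : 0 < σ * (u - v) := mul_pos hσ (by linarith)
    have hle : σ * (u - v) ≤ σ * B := mul_le_mul_of_nonneg_left (by linarith) hσ.le
    rw [if_pos h.le, if_neg h.not_ge, max_eq_right (by linarith), max_eq_left (by linarith),
      abs_le]
    constructor <;> linarith

/-- A double sum is bounded by half the sum of bounds on its symmetrized terms. -/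
lemma abs_sum_sum_le_half {ι : Type*} [Fintype ι] (d c : ι → ι → ℝ)
    (h : ∀ i j, |d i j + d j i| ≤ c i j) :
    |∑ i, ∑ j, d i j| ≤ (1 / 2) * ∑ i, ∑ j, c i j := by
  have hsym : ∑ i, ∑ j, (d i j + d j i) = 2 * ∑ i, ∑ j, d i j := by
    simp only [Finset.sum_add_distrib]
    rw [Finset.sum_comm (f := fun i j => d j i)]
    ring
  have hbound : |∑ i, ∑ j, (d i j + d j i)| ≤ ∑ i, ∑ j, c i j :=
    (Finset.abs_sum_le_sum_abs _ _).trans <| Finset.sum_le_sum fun i _ =>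
      (Finset.abs_sum_le_sum_abs _ _).trans <| Finset.sum_le_sum fun j _ => h i j
  rw [hsym, abs_mul, abs_two] at hbound
  linarith

/-- The hinge surrogate approximates the ranking loss up to a constant times the
total absolute pairwise eCPM gap. -/
theorem hinge_surrogate_approximation
    (n : ℕ) (hn : 1 ≤ n) (B σ : ℝ) (hB : 0 < B) (hσ : 0 < σ)
    (b p q : Fin n → ℝ)
    (hb : ∀ i, 0 < b i ∧ b i ≤ B)
    (hp : ∀ i, p i ∈ Set.Icc (0 : ℝ) 1)
    (hq : ∀ i, q i ∈ Set.Icc (0 : ℝ) 1) :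
    |(∑ i : Fin n, ∑ j : Fin n,
        (if i ≠ j then
          (b i * p i - b j * p j) * max (-(σ * (b i * q i - b j * q j))) 0
        else 0)) -
      (∑ i : Fin n, ∑ j : Fin n,
        (if i ≠ j then
          (b i * p i - b j * p j) * (if b i * q i ≤ b j * q j then (1 : ℝ) else 0)
        else 0))| ≤
    (1 / 2) * max 1 (σ * B - 1) *
      ∑ i : Fin n, ∑ j : Fin n, |b i * p i - b j * p j| := by
  have hu : ∀ i, 0 ≤ b i * q i := fun i => mul_nonneg (hb i).1.le (hq i).1
  have huB : ∀ i, b i * q i ≤ B := fun i =>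
    (mul_le_of_le_one_right (hb i).1.le (hq i).2).trans (hb i).2
  simp only [← Finset.sum_sub_distrib]
  have hsum : max 1 (σ * B - 1) * ∑ i : Fin n, ∑ j : Fin n, |b i * p i - b j * p j| =
      ∑ i : Fin n, ∑ j : Fin n, max 1 (σ * B - 1) * |b i * p i - b j * p j| := by
    simp only [Finset.mul_sum]
  rw [mul_assoc, hsum]
  refine abs_sum_sum_le_half _ _ fun i j => ?_
  by_cases hij : i = j
  · subst hij
    simp
  · have key := abs_gap_sub_gap_swap_le hσ (hu i) (huB i) (hu j) (huB j)
    simp only [ne_eq, hij, Ne.symm hij, not_false_eq_true, if_true]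
    refine le_trans (le_of_eq ?_) (mul_le_mul_of_nonneg_right key (abs_nonneg _))
    rw [← abs_mul]
    congr 1
    ring
end

section
/- Let n ≥ 1, B > 0, and b, p, p̂, q : Fin n → ℝ with 0 < b i ≤ B for all i. Define R(q) = ∑_{i ≠ j} (b i * p i − b j * p j) * χ(b i * q i ≤ b j * q j) and the plug-in loss ℓ̂(q) = ∑_{i ≠ j} (b i * p̂ i − b j * p̂ j) * χ(b i * q i ≤ b j * q j), both sums over ordered pairs of distinct indices. Then |ℓ̂(q) − R(q)| ≤ (n − 1) * B * ∑_{i ∈ Fin n} |p̂ i − p i|. -/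
/-!
Put `d i = b i * (phat i - p i)` and `χ i j = 1` if `b i * q i ≤ b j * q j`, else `0`. The difference
of the two sums is `∑_{i ≠ j} (d i - d j) * χ i j`; exchanging the names of the indices in the `d j`
part turns it into `∑ i, d i * ∑_{j ≠ i} (χ i j - χ j i)`. Each `χ i j - χ j i` lies in `[-1, 1]`, so
the inner sum is at most `n - 1` in absolute value, while `|d i| ≤ B * |phat i - p i|`. Grouping by
`i` before taking absolute values is what avoids an extra factor `2`.
-/

/-- The plug-in loss approximates the conditional risk up to the aggregate
estimation error of the plug-in CTR estimates. -/
theorem plug_in_loss_approximates_risk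
    (n : ℕ) (hn : 1 ≤ n) (B : ℝ) (hB : 0 < B)
    (b p phat q : Fin n → ℝ)
    (hb : ∀ i, 0 < b i ∧ b i ≤ B) :
    |(∑ i : Fin n, ∑ j : Fin n,
        (if i ≠ j then
          (b i * phat i - b j * phat j) *
            (if b i * q i ≤ b j * q j then (1 : ℝ) else 0)
        else 0)) -
      (∑ i : Fin n, ∑ j : Fin n,
        (if i ≠ j then
          (b i * p i - b j * p j) *
            (if b i * q i ≤ b j * q j then (1 : ℝ) else 0)
        else 0))| ≤
    ((n : ℝ) - 1) * B * ∑ i : Fin n, |phat i - p i| := by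
  set χ : Fin n → Fin n → ℝ := fun i j => if b i * q i ≤ b j * q j then 1 else 0 with hχ
  have hχ_sub : ∀ i j, |χ i j - χ j i| ≤ 1 := by
    intro i j
    simp only [hχ]
    split_ifs <;> norm_num
  have key : (∑ i, ∑ j, (if i ≠ j then (b i * phat i - b j * phat j) * χ i j else 0)) -
      (∑ i, ∑ j, (if i ≠ j then (b i * p i - b j * p j) * χ i j else 0)) =
      ∑ i, ∑ j, (if i ≠ j then b i * (phat i - p i) * (χ i j - χ j i) else 0) := by
    have swap : (∑ i, ∑ j, (if i ≠ j then b j * (phat j - p j) * χ i j else 0)) =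
        ∑ i, ∑ j, (if i ≠ j then b i * (phat i - p i) * χ j i else 0) := by
      rw [Finset.sum_comm]
      simp only [ne_comm]
    have split : (∑ i, ∑ j, (if i ≠ j then b i * (phat i - p i) * (χ i j - χ j i) else 0)) =
        (∑ i, ∑ j, (if i ≠ j then b i * (phat i - p i) * χ i j else 0)) -
        ∑ i, ∑ j, (if i ≠ j then b i * (phat i - p i) * χ j i else 0) := by
      simp only [← Finset.sum_sub_distrib]
      refine Finset.sum_congr rfl fun i _ => Finset.sum_congr rfl fun j _ => ?_
      split_ifs <;> ring
    rw [split, ← swap]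
    simp only [← Finset.sum_sub_distrib]
    refine Finset.sum_congr rfl fun i _ => Finset.sum_congr rfl fun j _ => ?_
    split_ifs <;> ring
  rw [key, Finset.mul_sum]
  refine (Finset.abs_sum_le_sum_abs _ _).trans (Finset.sum_le_sum fun i _ => ?_)
  have hterm : ∀ j, |if i ≠ j then b i * (phat i - p i) * (χ i j - χ j i) else 0| ≤
      if i ≠ j then B * |phat i - p i| else 0 := by
    intro j
    split_ifs
    · rw [abs_mul, abs_mul, abs_of_pos (hb i).1]
      calc b i * |phat i - p i| * |χ i j - χ j i|
          ≤ b i * |phat i - p i| * 1 :=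
            mul_le_mul_of_nonneg_left (hχ_sub i j) (mul_nonneg (hb i).1.le (abs_nonneg _))
        _ ≤ B * |phat i - p i| := by
            rw [mul_one]
            exact mul_le_mul_of_nonneg_right (hb i).2 (abs_nonneg _)
    · simp
  calc _ ≤ ∑ j, (if i ≠ j then B * |phat i - p i| else 0) :=
        (Finset.abs_sum_le_sum_abs _ _).trans (Finset.sum_le_sum fun j _ => hterm j)
    _ = ∑ j, (B * |phat i - p i| - if i = j then B * |phat i - p i| else 0) := by
        refine Finset.sum_congr rfl fun j _ => ?_
        by_cases h : i = j <;> simp [h]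
    _ = ((n : ℝ) - 1) * B * |phat i - p i| := by
        rw [Finset.sum_sub_distrib, Finset.sum_ite_eq]
        simp
        ring
end

section
/- Let n ≥ 1 and b, p, q : Fin n → ℝ with b i > 0, p i ∈ [0,1], q i ∈ [0,1] for all i. Define ℓ⁺(q) = ∑_{i ∈ Fin n} ∑_{j ∈ Fin n} max(b i * p i − b j * p j, 0) * χ(b i * q i ≤ b j * q j). Then for any index j* maximizing the predicted eCPM b j * q j, the welfare suboptimality is bounded by ℓ⁺: max_{i} (b i * p i) − b j* * p j* ≤ ℓ⁺(q). -/
/-!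
For every ad `i`, maximality of `jstar` makes the indicator of the pair `(i, jstar)` equal to `1`,
so that summand of the loss is at least `b i * p i - b jstar * p jstar`. All other summands are
nonnegative, so the whole loss bounds this gap for each `i`, hence for the maximum over `i`.
-/

/-- The single-slot welfare suboptimality of a prediction `q` is bounded by the
loss `ℓ⁺`. -/
theorem welfare_suboptimality_le_ell_plus
    (n : ℕ) (hn : 1 ≤ n) (b p q : Fin n → ℝ)
    (hb : ∀ i, 0 < b i)
    (hp : ∀ i, p i ∈ Set.Icc (0 : ℝ) 1)
    (hq : ∀ i, q i ∈ Set.Icc (0 : ℝ) 1)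
    (jstar : Fin n) (hjstar : ∀ i, b i * q i ≤ b jstar * q jstar) :
    Finset.univ.sup' ⟨⟨0, hn⟩, Finset.mem_univ _⟩ (fun i => b i * p i) -
        b jstar * p jstar ≤
      ∑ i : Fin n, ∑ j : Fin n,
        max (b i * p i - b j * p j) 0 *
          (if b i * q i ≤ b j * q j then (1 : ℝ) else 0) := by
  have hterm : ∀ i j : Fin n, 0 ≤ max (b i * p i - b j * p j) 0 *
      (if b i * q i ≤ b j * q j then (1 : ℝ) else 0) := fun i j =>
    mul_nonneg (le_max_right _ _) (by split_ifs <;> norm_num)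
  rw [sub_le_iff_le_add]
  refine Finset.sup'_le _ _ fun i _ => ?_
  rw [← sub_le_iff_le_add]
  -- The single summand `(i, jstar)` already dominates: its indicator is `1` by maximality.
  calc b i * p i - b jstar * p jstar
      ≤ max (b i * p i - b jstar * p jstar) 0 *
          (if b i * q i ≤ b jstar * q jstar then (1 : ℝ) else 0) := by
        rw [if_pos (hjstar i), mul_one]
        exact le_max_left _ _
    _ ≤ ∑ j : Fin n, max (b i * p i - b j * p j) 0 *
          (if b i * q i ≤ b j * q j then (1 : ℝ) else 0) :=
        Finset.single_le_sum (f := fun j => max (b i * p i - b j * p j) 0 *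
          (if b i * q i ≤ b j * q j then (1 : ℝ) else 0))
          (fun j _ => hterm i j) (Finset.mem_univ jstar)
    _ ≤ _ :=
        Finset.single_le_sum (f := fun i => ∑ j : Fin n, max (b i * p i - b j * p j) 0 *
          (if b i * q i ≤ b j * q j then (1 : ℝ) else 0))
          (fun k _ => Finset.sum_nonneg fun j _ => hterm k j) (Finset.mem_univ i)
end

section
/- Let n ≥ 1, B > 0, σ > 0, and b, p, p̂, q : Fin n → ℝ with 0 < b i ≤ B and q i ∈ [0,1] for all i. Define ℓ^{hinge,+}_σ(q) = ∑_{i ≠ j} max(b i * p i − b j * p j, 0) * max(−σ * (b i * q i − b j * q j), 0) and the plug-in version ℓ̂^{hinge,+}_σ(q) = ∑_{i ≠ j} max(b i * p̂ i − b j * p̂ j, 0) * max(−σ * (b i * q i − b j * q j), 0), both sums over ordered pairs of distinct indices. Then |ℓ̂^{hinge,+}_σ(q) − ℓ^{hinge,+}_σ(q)| ≤ (σ * B / 2) * ∑_{i ∈ Fin n} ∑_{j ∈ Fin n} | (b i * p̂ i − b j * p̂ j) − (b i * p i − b j * p j) |. -/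
/-!
The positive part is 1-Lipschitz, so each summand changes by at most `|E i j| * h i j`, where `E i j`
is the error of the eCPM gap and `h i j` the hinge penalty. The naive bound `h i j ≤ σ * B` loses a
factor 2; it is recovered by pairing `(i, j)` with `(j, i)`: `|E|` is symmetric, and at most one of
`h i j`, `h j i` is nonzero, so `h i j + h j i = σ * |b i * q i - b j * q j| ≤ σ * B`.
-/

/-- Symmetrization: against symmetric nonnegative weights, a bound on `h i j + h j i` acts as a
bound by half of it on `h i j`. -/
lemma sum_mul_le_half_of_symm {ι : Type*} [Fintype ι] (w h : ι → ι → ℝ) (C : ℝ)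
    (hw : ∀ i j, 0 ≤ w i j) (hsymm : ∀ i j, w i j = w j i)
    (hh : ∀ i j, h i j + h j i ≤ C) :
    ∑ i, ∑ j, w i j * h i j ≤ C / 2 * ∑ i, ∑ j, w i j := by
  have hswap : ∑ i, ∑ j, w i j * h i j = ∑ i, ∑ j, w i j * h j i := by
    rw [Finset.sum_comm]
    exact Finset.sum_congr rfl fun i _ => Finset.sum_congr rfl fun j _ => by rw [hsymm j i]
  have hle : ∑ i, ∑ j, w i j * h i j + ∑ i, ∑ j, w i j * h j i ≤ C * ∑ i, ∑ j, w i j := by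
    simp only [← Finset.sum_add_distrib, Finset.mul_sum]
    refine Finset.sum_le_sum fun i _ => Finset.sum_le_sum fun j _ => ?_
    nlinarith [mul_le_mul_of_nonneg_left (hh i j) (hw i j)]
  linarith

lemma hinge_add_hinge_swap_le {σ B x y : ℝ} (hσ : 0 ≤ σ) (hx : x ∈ Set.Icc 0 B)
    (hy : y ∈ Set.Icc 0 B) :
    max (-(σ * (x - y))) 0 + max (-(σ * (y - x))) 0 ≤ σ * B := by
  obtain ⟨hx0, hxB⟩ := hx
  obtain ⟨hy0, hyB⟩ := hy
  have h1 : σ * (x - y) ≤ σ * B := mul_le_mul_of_nonneg_left (by linarith) hσ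
  have h2 : σ * (y - x) ≤ σ * B := mul_le_mul_of_nonneg_left (by linarith) hσ
  have h3 : 0 ≤ σ * B := mul_nonneg hσ (by linarith)
  have h4 : σ * (y - x) = -(σ * (x - y)) := by ring
  rcases max_cases (-(σ * (x - y))) 0 with ⟨e, _⟩ | ⟨e, _⟩ <;>
    rcases max_cases (-(σ * (y - x))) 0 with ⟨f, _⟩ | ⟨f, _⟩ <;> rw [e, f] <;> linarith

/-- The plug-in hinge-plus loss approximates the true hinge-plus loss up to
`σB/2` times the total absolute estimation error of the eCPM gaps. -/
theorem plug_in_hinge_plus_approximation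
    (n : ℕ) (hn : 1 ≤ n) (B σ : ℝ) (hB : 0 < B) (hσ : 0 < σ)
    (b p phat q : Fin n → ℝ)
    (hb : ∀ i, 0 < b i ∧ b i ≤ B)
    (hq : ∀ i, q i ∈ Set.Icc (0 : ℝ) 1) :
    |(∑ i : Fin n, ∑ j : Fin n,
        (if i ≠ j then
          max (b i * phat i - b j * phat j) 0 *
            max (-(σ * (b i * q i - b j * q j))) 0
        else 0)) -
      (∑ i : Fin n, ∑ j : Fin n,
        (if i ≠ j then
          max (b i * p i - b j * p j) 0 *
            max (-(σ * (b i * q i - b j * q j))) 0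
        else 0))| ≤
    (σ * B / 2) *
      ∑ i : Fin n, ∑ j : Fin n,
        |(b i * phat i - b j * phat j) - (b i * p i - b j * p j)| := by
  have hbq : ∀ i, b i * q i ∈ Set.Icc 0 B := fun i =>
    ⟨mul_nonneg (hb i).1.le (hq i).1,
      (mul_le_of_le_one_right (hb i).1.le (hq i).2).trans (hb i).2⟩
  refine le_trans ?_ (sum_mul_le_half_of_symm
    (fun i j => |(b i * phat i - b j * phat j) - (b i * p i - b j * p j)|)
    (fun i j => max (-(σ * (b i * q i - b j * q j))) 0) (σ * B)
    (fun i j => abs_nonneg _)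
    (fun i j => by
      rw [← abs_neg]
      congr 1
      ring)
    (fun i j => hinge_add_hinge_swap_le hσ.le (hbq i) (hbq j)))
  simp only [← Finset.sum_sub_distrib]
  refine (Finset.abs_sum_le_sum_abs _ _).trans (Finset.sum_le_sum fun i _ => ?_)
  refine (Finset.abs_sum_le_sum_abs _ _).trans (Finset.sum_le_sum fun j _ => ?_)
  have hnonneg : 0 ≤ max (-(σ * (b i * q i - b j * q j))) 0 := le_max_right _ _
  split_ifs
  · rw [← sub_mul, abs_mul, abs_of_nonneg hnonneg]
    exact mul_le_mul_of_nonneg_right (abs_max_sub_max_le_abs _ _ _) hnonneg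
  · simpa using mul_nonneg (abs_nonneg _) hnonneg
end

section
/- Let n ≥ 1, B > 0, σ > 0, and b, p, q : Fin n → ℝ with 0 < b i ≤ B, p i ∈ [0,1], q i ∈ [0,1] for all i. Define ℓ⁺(q) = ∑_{i ≠ j} max(b i * p i − b j * p j, 0) * χ(b i * q i ≤ b j * q j) and ℓ^{hinge,+}_σ(q) = ∑_{i ≠ j} max(b i * p i − b j * p j, 0) * max(−σ * (b i * q i − b j * q j), 0), both sums over ordered pairs of distinct indices. Then |ℓ^{hinge,+}_σ(q) − ℓ⁺(q)| ≤ (1/2) * max{1, σ*B − 1} * ∑_{i ∈ Fin n} ∑_{j ∈ Fin n} |b i * p i − b j * p j|. -/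
/-!
The bound holds pair by pair. If `b i * q i ≤ b j * q j`, the hinge value lies in `[0, σ * B]`, since
all predicted eCPMs lie in `[0, B]`, so it differs from the indicator value `1` by at most
`max 1 (σ * B - 1)`; otherwise both the hinge and the indicator vanish (`abs_hinge_sub_ind_le`).
Weighting by the positive parts and summing leaves `∑ i, ∑ j, max (x i - x j) 0` with
`x i = b i * p i`, which is half of `∑ i, ∑ j, |x i - x j|` by antisymmetry
(`sum_posPart_eq_half_sum_abs`).
-/

theorem abs_hinge_sub_ind_le {B σ u v : ℝ} (hσ : 0 < σ) (hu : 0 ≤ u) (hv : v ≤ B) :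
    |max (-(σ * (u - v))) 0 - (if u ≤ v then (1 : ℝ) else 0)| ≤ max 1 (σ * B - 1) := by
  split_ifs with h
  · have h0 : 0 ≤ σ * (v - u) := mul_nonneg hσ.le (by linarith)
    have h1 : σ * (v - u) ≤ σ * B := mul_le_mul_of_nonneg_left (by linarith) hσ.le
    have h2 : -(σ * (u - v)) = σ * (v - u) := by ring
    rw [h2, max_eq_left h0, abs_le]
    have h3 := le_max_left 1 (σ * B - 1)
    have h4 := le_max_right 1 (σ * B - 1)
    constructor <;> linarith
  · have h0 : 0 ≤ σ * (u - v) := mul_nonneg hσ.le (by linarith)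
    rw [max_eq_right (by linarith)]
    simp

theorem sum_posPart_eq_half_sum_abs {n : ℕ} (x : Fin n → ℝ) :
    ∑ i, ∑ j, max (x i - x j) 0 = (1 / 2) * ∑ i, ∑ j, |x i - x j| := by
  have hswap : ∑ i, ∑ j, max (x i - x j) 0 = ∑ i, ∑ j, max (x j - x i) 0 :=
    Finset.sum_comm
  have hadd : ∑ i, ∑ j, |x i - x j|
      = ∑ i, ∑ j, max (x i - x j) 0 + ∑ i, ∑ j, max (x j - x i) 0 := by
    simp only [← Finset.sum_add_distrib]
    refine Finset.sum_congr rfl fun i _ => Finset.sum_congr rfl fun j _ => ?_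
    rcases le_total (x i) (x j) with h | h
    · rw [abs_of_nonpos (by linarith), max_eq_right (by linarith), max_eq_left (by linarith)]
      ring
    · rw [abs_of_nonneg (by linarith), max_eq_left (by linarith), max_eq_right (by linarith)]
      ring
  linarith

/-- The hinge-plus surrogate approximates `ℓ⁺` up to a constant times the total
absolute pairwise eCPM gap. -/
theorem hinge_plus_approximates_ell_plus
    (n : ℕ) (hn : 1 ≤ n) (B σ : ℝ) (hB : 0 < B) (hσ : 0 < σ)
    (b p q : Fin n → ℝ)
    (hb : ∀ i, 0 < b i ∧ b i ≤ B)
    (hp : ∀ i, p i ∈ Set.Icc (0 : ℝ) 1)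
    (hq : ∀ i, q i ∈ Set.Icc (0 : ℝ) 1) :
    |(∑ i : Fin n, ∑ j : Fin n,
        (if i ≠ j then
          max (b i * p i - b j * p j) 0 *
            max (-(σ * (b i * q i - b j * q j))) 0
        else 0)) -
      (∑ i : Fin n, ∑ j : Fin n,
        (if i ≠ j then
          max (b i * p i - b j * p j) 0 *
            (if b i * q i ≤ b j * q j then (1 : ℝ) else 0)
        else 0))| ≤
    (1 / 2) * max 1 (σ * B - 1) *
      ∑ i : Fin n, ∑ j : Fin n, |b i * p i - b j * p j| := by
  have hpos : ∀ i, 0 ≤ b i * q i := fun i => mul_nonneg (hb i).1.le (hq i).1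
  have hle : ∀ i, b i * q i ≤ B := fun i =>
    (mul_le_of_le_one_right (hb i).1.le (hq i).2).trans (hb i).2
  rw [mul_right_comm, ← sum_posPart_eq_half_sum_abs (fun i => b i * p i)]
  simp only [← Finset.sum_sub_distrib, Finset.sum_mul]
  refine (Finset.abs_sum_le_sum_abs _ _).trans (Finset.sum_le_sum fun i _ => ?_)
  refine (Finset.abs_sum_le_sum_abs _ _).trans (Finset.sum_le_sum fun j _ => ?_)
  have hw : 0 ≤ max (b i * p i - b j * p j) 0 := le_max_right _ _
  by_cases hij : i = j
  · simp [hij]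
  · rw [if_pos hij, if_pos hij, ← mul_sub, abs_mul, abs_of_nonneg hw]
    exact mul_le_mul_of_nonneg_left (abs_hinge_sub_ind_le hσ (hpos i) (hle j)) hw
end
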